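/- Square-function bound by the projected seminorm: Let s ∈ (0,1), 1 < p < ∞, and f ∈ L^p(ℝ^d; ℝ^d). Set F = (f, 0) : ℝ^d → ℝ^{d+1} and U(x,t) = (ℙ_t ∗ F)(x). Then there exists a constant C = C(d,p,s) > 0 such that ( ∫_0^∞ ( t^{1−s} ‖∂_t U(·,t)‖_{L^p(ℝ^d)} )^p (dt/t) )^{1/p} ≤ C · [f]_{𝒳^s_p(ℝ^d)}. -/

import Mathlib

open MeasureTheory Filter Set
open scoped ENNReal NNReal Topology

noncomputable section

abbrev Ed (d : ℕ) : Type := EuclideanSpace ℝ (Fin d)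

/-- The `p`-th power of the projected Gagliardo seminorm `[f]_{𝒳^s_p(Ω)}^p`. -/
def projGagP (d : ℕ) (s p : ℝ) (Ω : Set (Ed d)) (f : Ed d → Ed d) : ℝ≥0∞ :=
  ∫⁻ x in Ω, ∫⁻ y in Ω,
    ENNReal.ofReal ((|(inner ℝ (f y - f x) (y - x) : ℝ)| / ‖y - x‖) ^ p /
      ‖y - x‖ ^ ((d : ℝ) + s * p))

/-- The projected Gagliardo seminorm `[f]_{𝒳^s_p(Ω)}`. -/
def projSem (d : ℕ) (s p : ℝ) (Ω : Set (Ed d)) (f : Ed d → Ed d) : ℝ≥0∞ :=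
  projGagP d s p Ω f ^ (1 / p)

/-- The `p`-th power of the Gagliardo seminorm `[f]_{W^{s,p}(Ω)}^p`. -/
def gagP (d : ℕ) (s p : ℝ) (Ω : Set (Ed d)) (f : Ed d → Ed d) : ℝ≥0∞ :=
  ∫⁻ x in Ω, ∫⁻ y in Ω,
    ENNReal.ofReal (‖f y - f x‖ ^ p / ‖y - x‖ ^ ((d : ℝ) + s * p))

/-- The Gagliardo seminorm `[f]_{W^{s,p}(Ω)}`. -/
def gagSem (d : ℕ) (s p : ℝ) (Ω : Set (Ed d)) (f : Ed d → Ed d) : ℝ≥0∞ :=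
  gagP d s p Ω f ^ (1 / p)

/-- The surface measure `ω_d` of the unit sphere in `ℝ^{d+1}`. -/
def sphereVol (d : ℕ) : ℝ :=
  ((d : ℝ) + 1) * (volume (Metric.ball (0 : EuclideanSpace ℝ (Fin (d+1))) 1)).toReal

/-- The Poisson kernel `p_t(x)` for the upper half-space `ℝ^d × (0,∞)`. -/
def halfSpacePoissonKernel (d : ℕ) (t : ℝ) (x : Ed d) : ℝ :=
  (2 / sphereVol d) * t / (‖x‖ ^ 2 + t ^ 2) ^ (((d : ℝ) + 1) / 2)

/-- The (componentwise) Poisson integral `u(x,t) = (p_t ∗ f)(x)` of a vector field. -/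
def poissonInt (d m : ℕ) (f : Ed d → Ed m) (x : Ed d) (t : ℝ) : Ed m :=
  ∫ y, halfSpacePoissonKernel d t y • f (x - y)

/-- The vector `(x, t) ∈ ℝ^{d+1}`. -/
def snocVec (d : ℕ) (x : Ed d) (t : ℝ) : Fin (d + 1) → ℝ := Fin.snoc (fun i => x i) t

/-- The entries `𝔭_t^{jk}(x)` of the Poisson-type matrix kernel `ℙ_t`. -/
def pEntry (d : ℕ) (t : ℝ) (j k : Fin (d + 1)) (x : Ed d) : ℝ :=
  (2 * ((d : ℝ) + 1) / sphereVol d) * t * snocVec d x t j *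
    snocVec d x t k / (‖x‖ ^ 2 + t ^ 2) ^ (((d : ℝ) + 3) / 2)

/-- The Poisson-type integral `U(x,t) = (ℙ_t ∗ F)(x)`, the convolution taken in the sense of
matrix–vector multiplication. -/
def pConv (d : ℕ) (t : ℝ) (F : Ed d → Ed (d + 1)) (x : Ed d) : Ed (d + 1) :=
  (EuclideanSpace.equiv (Fin (d + 1)) ℝ).symm
    (fun i => ∫ y, ∑ j, pEntry d t i j y * F (x - y) j)

/-- The field `F = (f, 0) : ℝ^d → ℝ^{d+1}` obtained by appending a zero component. -/
def appendZero (d : ℕ) (f : Ed d → Ed d) : Ed d → Ed (d + 1) :=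
  fun y => (EuclideanSpace.equiv (Fin (d + 1)) ℝ).symm (Fin.snoc (fun i => f y i) 0)

/-! With `D(x, y) = |(f(x - y) - f(x)) · y| / |y|^{1+s}`, one has pointwise
`t^{1-s} |∂_t U(x, t)| ≤ A ∫ φ_t(y) D(x, y) dy` for the kernel
`φ_t(y) = t^{1-s} |y|^s (|y|² + t²)^{-(d+1)/2}`: the integral of `ℙ_t` over `ℝ^d` does not depend
on `t`, so `f(x)` may be subtracted from `f(x - y)`, and since the last component of `F` vanishes
only the projection of the increment onto `y` enters. The family `φ_t` is an `L¹`-normalised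
dilation, so `∫ φ_t(y) dy` is constant, while `∫₀^∞ φ_t(y) dt/t = c |y|^{-d}`. Jensen's inequality
with respect to `φ_t(y) dy` followed by Tonelli then bounds `∫₀^∞ ‖t^{1-s} ∂_t U‖_p^p dt/t` by a
multiple of `∫∫ |y|^{-d} D(x, y)^p dy dx`, which is the projected seminorm. -/

section Schur

variable {α β τ : Type*} [MeasurableSpace α] [MeasurableSpace β] [MeasurableSpace τ]
  {μ : Measure α} {ν : Measure β} {m : Measure τ} {p : ℝ}

lemma lintegral_rpow_le_measure_univ_rpow_mul {g : α → ℝ≥0∞} (hp : 1 ≤ p)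
    (hg : AEMeasurable g μ) :
    (∫⁻ y, g y ∂μ) ^ p ≤ μ univ ^ (p - 1) * ∫⁻ y, g y ^ p ∂μ := by
  have hp0 : 0 < p := by linarith
  have h := eLpNorm'_le_eLpNorm'_mul_rpow_measure_univ one_pos hp hg.aestronglyMeasurable
  simp only [eLpNorm'_eq_lintegral_enorm, enorm_eq_self, ENNReal.rpow_one, div_one] at h
  calc (∫⁻ y, g y ∂μ) ^ p
      ≤ ((∫⁻ y, g y ^ p ∂μ) ^ (1 / p) * μ univ ^ (1 - 1 / p)) ^ p :=
        ENNReal.rpow_le_rpow h hp0.le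
    _ = μ univ ^ (p - 1) * ∫⁻ y, g y ^ p ∂μ := by
        rw [ENNReal.mul_rpow_of_nonneg _ _ hp0.le, ← ENNReal.rpow_mul, ← ENNReal.rpow_mul,
          one_div_mul_cancel hp0.ne', ENNReal.rpow_one, sub_mul, one_mul,
          one_div_mul_cancel hp0.ne', mul_comm]

lemma lintegral_mul_rpow_le {k g : α → ℝ≥0∞} (hp : 1 ≤ p) (hk : AEMeasurable k μ)
    (hg : AEMeasurable g μ) :
    (∫⁻ y, k y * g y ∂μ) ^ p ≤ (∫⁻ y, k y ∂μ) ^ (p - 1) * ∫⁻ y, k y * g y ^ p ∂μ := by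
  have h := lintegral_rpow_le_measure_univ_rpow_mul hp
    (hg.mono_ac (withDensity_absolutelyContinuous μ k))
  rwa [withDensity_apply _ MeasurableSet.univ, Measure.restrict_univ,
    lintegral_withDensity_eq_lintegral_mul₀ hk hg,
    lintegral_withDensity_eq_lintegral_mul₀ hk (hg.pow_const p)] at h

lemma lintegral_rpow_lintegral_mul_le [SFinite μ] {k : α → ℝ≥0∞}
    {D : β → α → ℝ≥0∞} {M : ℝ≥0∞} (hp : 1 ≤ p) (hM : M ≠ ∞) (hk : Measurable k)
    (hD : AEMeasurable (Function.uncurry D) (ν.prod μ)) (hkM : ∫⁻ y, k y ∂μ ≤ M) :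
    ∫⁻ x, (∫⁻ y, k y * D x y ∂μ) ^ p ∂ν ≤
      M ^ (p - 1) * ∫⁻ z, k z.2 * D z.1 z.2 ^ p ∂(ν.prod μ) := by
  have hp1 : 0 ≤ p - 1 := by linarith
  have hkD : AEMeasurable (fun z : β × α => k z.2 * D z.1 z.2 ^ p) (ν.prod μ) :=
    (hk.comp measurable_snd).aemeasurable.mul (hD.pow_const p)
  rw [lintegral_prod _ hkD,
    ← lintegral_const_mul' _ _ (ENNReal.rpow_ne_top_of_nonneg hp1 hM)]
  refine lintegral_mono_ae ?_
  filter_upwards [hD.aestronglyMeasurable.prodMk_left] with x hDx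
  exact (lintegral_mul_rpow_le hp hk.aemeasurable hDx.aemeasurable).trans
    (mul_le_mul' (ENNReal.rpow_le_rpow hkM hp1) le_rfl)

theorem lintegral_lintegral_rpow_lintegral_mul_le [SFinite μ] [SFinite ν] [SFinite m]
    {ρ : τ → ℝ≥0∞} {k : τ → α → ℝ≥0∞} {w : α → ℝ≥0∞} {D : β → α → ℝ≥0∞} {M : ℝ≥0∞}
    (hp : 1 ≤ p) (hM : M ≠ ∞) (hρ : Measurable ρ) (hk : Measurable (Function.uncurry k))
    (hD : AEMeasurable (Function.uncurry D) (ν.prod μ))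
    (hkM : ∀ᵐ t ∂m, ∫⁻ y, k t y ∂μ ≤ M) (hkw : ∀ y, ∫⁻ t, ρ t * k t y ∂m ≤ w y) :
    ∫⁻ t, ρ t * ∫⁻ x, (∫⁻ y, k t y * D x y ∂μ) ^ p ∂ν ∂m ≤
      M ^ (p - 1) * ∫⁻ x, ∫⁻ y, w y * D x y ^ p ∂μ ∂ν := by
  have hM' : M ^ (p - 1) ≠ ∞ := ENNReal.rpow_ne_top_of_nonneg (by linarith) hM
  have hDp : AEMeasurable (fun z : β × α => D z.1 z.2 ^ p) (ν.prod μ) := hD.pow_const p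
  have hρk : Measurable (Function.uncurry fun t y => ρ t * k t y) :=
    (hρ.comp measurable_fst).mul hk
  calc ∫⁻ t, ρ t * ∫⁻ x, (∫⁻ y, k t y * D x y ∂μ) ^ p ∂ν ∂m
      ≤ ∫⁻ t, M ^ (p - 1) * ∫⁻ z, ρ t * k t z.2 * D z.1 z.2 ^ p ∂(ν.prod μ) ∂m := by
        refine lintegral_mono_ae ?_
        filter_upwards [hkM] with t ht
        have hkt : Measurable (k t) := hk.of_uncurry_left
        simp only [mul_assoc (ρ t)]
        rw [lintegral_const_mul'' _ (by fun_prop), mul_left_comm]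
        gcongr
        exact lintegral_rpow_lintegral_mul_le hp hM hkt hD ht
    _ = M ^ (p - 1) * ∫⁻ z, (∫⁻ t, ρ t * k t z.2 ∂m) * D z.1 z.2 ^ p ∂(ν.prod μ) := by
        rw [lintegral_const_mul' _ _ hM', lintegral_lintegral_swap]
        · congr 2 with z
          exact lintegral_mul_const _ (hρk.of_uncurry_right (y := z.2))
        · exact (hρk.comp (measurable_fst.prodMk measurable_snd.snd)).aemeasurable.mul
            hDp.comp_snd
    _ = M ^ (p - 1) * ∫⁻ x, ∫⁻ y, (∫⁻ t, ρ t * k t y ∂m) * D x y ^ p ∂μ ∂ν := by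
        rw [lintegral_prod]
        exact (hρk.lintegral_prod_left.comp measurable_snd).aemeasurable.mul hDp
    _ ≤ M ^ (p - 1) * ∫⁻ x, ∫⁻ y, w y * D x y ^ p ∂μ ∂ν := by
        gcongr with x y
        exact hkw y

end Schur

section PoissonWeight

variable {E : Type*} [NormedAddCommGroup E]

/-- The decaying weight `(‖y‖² + t²)^{-r/2}` on the slice at height `t` of the upper half-space.
For `r = d + 1` it is, up to the factor `t` and a constant, the Poisson kernel of the half-space,
and every entry of the matrix kernel is dominated by it. -/
def poissonWeight (r t : ℝ) (y : E) : ℝ := (‖y‖ ^ 2 + t ^ 2) ^ (-r / 2)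

lemma poissonWeight_nonneg (r t : ℝ) (y : E) : 0 ≤ poissonWeight r t y := by
  unfold poissonWeight; positivity

lemma poissonWeight_anti {r s t : ℝ} (hr : 0 ≤ r) (hs : 0 < s) (hst : s ≤ t) (y : E) :
    poissonWeight r t y ≤ poissonWeight r s y := by
  unfold poissonWeight
  exact Real.rpow_le_rpow_of_nonpos (by positivity) (by gcongr) (by linarith)

lemma poissonWeight_add_two_mul (r : ℝ) {t : ℝ} (ht : t ≠ 0) (y : E) :
    poissonWeight (r + 2) t y * (‖y‖ ^ 2 + t ^ 2) = poissonWeight r t y := by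
  unfold poissonWeight
  rw [← Real.rpow_add_one (by positivity)]
  congr 1
  ring

lemma poissonWeight_smul [NormedSpace ℝ E] (r : ℝ) {a : ℝ} (ha : 0 < a) (t : ℝ) (y : E) :
    poissonWeight r (a * t) (a • y) = a ^ (-r) * poissonWeight r t y := by
  unfold poissonWeight
  rw [norm_smul, Real.norm_of_nonneg ha.le, mul_pow, mul_pow, ← mul_add,
    Real.mul_rpow (by positivity) (by positivity), ← Real.rpow_natCast, ← Real.rpow_mul ha.le]
  congr 2
  push_cast
  ring

lemma hasDerivAt_poissonWeight (r : ℝ) {t : ℝ} (ht : t ≠ 0) (y : E) :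
    HasDerivAt (fun u => poissonWeight r u y) (-(r * t * poissonWeight (r + 2) t y)) t := by
  have hQ : HasDerivAt (fun u : ℝ => ‖y‖ ^ 2 + u ^ 2) (2 * t) t := by
    simpa using (hasDerivAt_pow 2 t).const_add (‖y‖ ^ 2)
  refine (hQ.rpow_const (p := -r / 2) (Or.inl (by positivity))).congr_deriv ?_
  rw [poissonWeight, show -(r + 2) / 2 = -r / 2 - 1 by ring]
  ring

@[fun_prop]
lemma measurable_poissonWeight [MeasurableSpace E] [OpensMeasurableSpace E] {α : Type*}
    [MeasurableSpace α] (r : ℝ) {t : α → ℝ} {y : α → E} (ht : Measurable t) (hy : Measurable y) :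
    Measurable fun a => poissonWeight r (t a) (y a) := by
  unfold poissonWeight
  fun_prop

lemma exists_poissonWeight_le_comp_sub {r t : ℝ} (hr : 0 ≤ r) (ht : 0 < t) (x : E) :
    ∃ C, ∀ y, poissonWeight r t y ≤ C * poissonWeight r 1 (x - y) := by
  set K : ℝ := 2 + (1 + 2 * ‖x‖ ^ 2) / t ^ 2 with hK
  have hK0 : 0 < K := by positivity
  refine ⟨K ^ (r / 2), fun y => ?_⟩
  have hKt : K * t ^ 2 = 2 * t ^ 2 + (1 + 2 * ‖x‖ ^ 2) := by rw [hK]; field_simp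
  have hKy : 2 * ‖y‖ ^ 2 ≤ K * ‖y‖ ^ 2 := by
    gcongr
    exact le_add_of_nonneg_right (by positivity)
  have hxy : ‖x - y‖ ^ 2 ≤ 2 * ‖x‖ ^ 2 + 2 * ‖y‖ ^ 2 := by
    have := norm_sub_le x y
    nlinarith [sq_nonneg (‖x‖ - ‖y‖), norm_nonneg (x - y)]
  have hQ : ‖x - y‖ ^ 2 + 1 ^ 2 ≤ K * (‖y‖ ^ 2 + t ^ 2) := by nlinarith [sq_nonneg t]
  have hcancel : K ^ (r / 2) * K ^ (-r / 2) = 1 := by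
    rw [← Real.rpow_add hK0, neg_div, add_neg_cancel, Real.rpow_zero]
  calc poissonWeight r t y
      = K ^ (r / 2) * (K * (‖y‖ ^ 2 + t ^ 2)) ^ (-r / 2) := by
        rw [Real.mul_rpow hK0.le (by positivity), ← mul_assoc, hcancel, one_mul, poissonWeight]
    _ ≤ K ^ (r / 2) * poissonWeight r 1 (x - y) := by
        gcongr
        exact Real.rpow_le_rpow_of_nonpos (by positivity) hQ (by linarith)

lemma aestronglyMeasurable_of_integrable_poissonWeight_smul [MeasurableSpace E]
    [OpensMeasurableSpace E] {μ : Measure E} {F : Type*} [NormedAddCommGroup F] [NormedSpace ℝ F]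
    {f : E → F} {r t : ℝ} (ht : t ≠ 0) (hf : Integrable (fun y => poissonWeight r t y • f y) μ) :
    AEStronglyMeasurable f μ := by
  have hinv : Measurable fun y : E => (poissonWeight r t y)⁻¹ := by fun_prop
  refine (hinv.aestronglyMeasurable.smul hf.1).congr (Eventually.of_forall fun y => ?_)
  have hpos : poissonWeight r t y ≠ 0 := by unfold poissonWeight; positivity
  exact inv_smul_smul₀ hpos (f y)

section Integrability

variable [NormedSpace ℝ E] [FiniteDimensional ℝ E] [MeasurableSpace E] [BorelSpace E]
  {μ : Measure E} [μ.IsAddHaarMeasure]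

lemma integrable_poissonWeight {r t : ℝ} (hr : Module.finrank ℝ E < r) (ht : 0 < t) :
    Integrable (poissonWeight r t : E → ℝ) μ := by
  have hone : Integrable (poissonWeight r 1 : E → ℝ) μ := by
    convert integrable_rpow_neg_one_add_norm_sq (μ := μ) hr using 2 with y
    rw [poissonWeight, one_pow, add_comm]
  refine (integrable_comp_smul_iff μ _ ht.ne').1 ((hone.const_mul (t ^ (-r))).congr ?_)
  filter_upwards with y
  simpa using (poissonWeight_smul r ht 1 y).symm

variable {F : Type*} [NormedAddCommGroup F] [NormedSpace ℝ F] {f : E → F} {r : ℝ}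

lemma integrable_poissonWeight_smul_comp_sub (hr : 0 ≤ r)
    (hf : Integrable (fun y => poissonWeight r 1 y • f y) μ) {t : ℝ} (ht : 0 < t) (x : E) :
    Integrable (fun y => poissonWeight r t y • f (x - y)) μ := by
  obtain ⟨C, hC⟩ := exists_poissonWeight_le_comp_sub hr ht x
  have hpos (y : E) : 0 < poissonWeight r 1 (x - y) := by unfold poissonWeight; positivity
  have hratio : Measurable fun y => poissonWeight r t y / poissonWeight r 1 (x - y) := by fun_prop
  refine ((hf.comp_sub_left x).bdd_smul C hratio.aestronglyMeasurable ?_).congr ?_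
  · filter_upwards with y
    rw [Real.norm_of_nonneg (div_nonneg (poissonWeight_nonneg r t y) (hpos y).le)]
    exact (div_le_iff₀ (hpos y)).2 (hC y)
  · filter_upwards with y
    rw [Pi.smul_apply', smul_smul, div_mul_cancel₀ _ (hpos y).ne']

lemma integrable_poissonWeight_smul_of_memLp {p : ℝ} (hr : Module.finrank ℝ E < r) (hp : 1 ≤ p)
    (hf : MemLp f (ENNReal.ofReal p) μ) :
    Integrable (fun y => poissonWeight r 1 y • f y) μ := by
  have hp0 : 0 < p := by linarith
  have hfp : Integrable (fun y => ‖f y‖ ^ p) μ := by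
    simpa [ENNReal.toReal_ofReal hp0.le, hp0] using
      hf.integrable_norm_rpow (by simpa using hp0) ENNReal.ofReal_ne_top
  have hw : Measurable (poissonWeight r 1 : E → ℝ) := by fun_prop
  refine ((integrable_poissonWeight hr one_pos).add hfp).mono'
    (hw.aestronglyMeasurable.smul hf.1) (Eventually.of_forall fun y => ?_)
  have hw0 : 0 ≤ poissonWeight r 1 y := poissonWeight_nonneg r 1 y
  have hw1 : poissonWeight r 1 y ≤ 1 :=
    Real.rpow_le_one_of_one_le_of_nonpos (by simp)
      (by linarith [(Module.finrank ℝ E).cast_nonneg (α := ℝ)])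
  have hle : ‖f y‖ ≤ 1 + ‖f y‖ ^ p := by
    rcases le_total ‖f y‖ 1 with h | h
    · exact h.trans (le_add_of_nonneg_right (by positivity))
    · exact (Real.self_le_rpow_of_one_le h hp).trans (by simp)
  calc ‖poissonWeight r 1 y • f y‖
      = poissonWeight r 1 y * ‖f y‖ := by rw [norm_smul, Real.norm_of_nonneg hw0]
    _ ≤ poissonWeight r 1 y * (1 + ‖f y‖ ^ p) := by gcongr
    _ ≤ poissonWeight r 1 y + ‖f y‖ ^ p := by
        rw [mul_add, mul_one]
        gcongr
        exact mul_le_of_le_one_left (by positivity) hw1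

end Integrability

end PoissonWeight

section SquareKernel

variable {E : Type*} [NormedAddCommGroup E] [NormedSpace ℝ E]

/-- The kernel `t^{1-s} ‖y‖^s (‖y‖² + t²)^{-(d+1)/2}`, `d = dim E`, which averages the difference
quotients of order `s` in the square function. It is the `L¹`-normalised dilation by `t` of its
value at `t = 1`. -/
def squareKernel (s t : ℝ) (y : E) : ℝ :=
  t ^ (1 - s) * ‖y‖ ^ s * poissonWeight (Module.finrank ℝ E + 1) t y

/-- The constant `∫₀^∞ t^{-s} (1 + t²)^{-(d+1)/2} dt`, the value of `‖y‖^d ∫₀^∞ φ_t(y) dt/t` for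
`φ = squareKernel s` on a space of dimension `d` and any `y ≠ 0`. -/
def squareKernelConst (d : ℕ) (s : ℝ) : ℝ :=
  ∫ t in Ioi (0 : ℝ), t ^ (-s) * poissonWeight (d + 1) 1 t

lemma squareKernel_nonneg {s t : ℝ} (ht : 0 ≤ t) (y : E) : 0 ≤ squareKernel s t y :=
  mul_nonneg (by positivity) (poissonWeight_nonneg _ t y)

@[fun_prop]
lemma measurable_squareKernel [MeasurableSpace E] [OpensMeasurableSpace E] {α : Type*}
    [MeasurableSpace α] (s : ℝ) {t : α → ℝ} {y : α → E} (ht : Measurable t) (hy : Measurable y) :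
    Measurable fun a => squareKernel s (t a) (y a) := by
  unfold squareKernel
  fun_prop

lemma squareKernel_smul (s : ℝ) {t : ℝ} (ht : 0 < t) (y : E) :
    squareKernel s t (t • y) = (t ^ Module.finrank ℝ E)⁻¹ * squareKernel s 1 y := by
  have hweight := poissonWeight_smul (Module.finrank ℝ E + 1) ht 1 y
  have hpow : t ^ (1 - s) * t ^ s * t ^ (-(Module.finrank ℝ E + 1 : ℝ)) =
      (t ^ Module.finrank ℝ E)⁻¹ := by
    rw [← Real.rpow_add ht, ← Real.rpow_add ht, ← Real.rpow_natCast, ← Real.rpow_neg ht.le]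
    congr 1
    ring
  rw [mul_one] at hweight
  rw [squareKernel, squareKernel, hweight, norm_smul, Real.norm_of_nonneg ht.le,
    Real.mul_rpow ht.le (norm_nonneg y), ← hpow, Real.one_rpow]
  ring

section Integral

variable [FiniteDimensional ℝ E] [MeasurableSpace E] [BorelSpace E] {μ : Measure E}
  [μ.IsAddHaarMeasure] {s t : ℝ}

lemma integrable_squareKernel_one (hs : s ∈ Ioo (0 : ℝ) 1) :
    Integrable (squareKernel s 1 : E → ℝ) μ := by
  have hdecay : Integrable (poissonWeight (Module.finrank ℝ E + 1 - s) 1 : E → ℝ) μ :=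
    integrable_poissonWeight (by linarith [hs.2]) one_pos
  have hmeas : Measurable (squareKernel s 1 : E → ℝ) := by fun_prop
  refine hdecay.mono' hmeas.aestronglyMeasurable (Eventually.of_forall fun y => ?_)
  have hnorm : ‖y‖ ^ s ≤ (‖y‖ ^ 2 + 1 ^ 2) ^ (s / 2) := by
    calc ‖y‖ ^ s = (‖y‖ ^ 2) ^ (s / 2) := by
          rw [← Real.rpow_natCast, ← Real.rpow_mul (norm_nonneg y)]
          congr 1
          push_cast
          ring
      _ ≤ (‖y‖ ^ 2 + 1 ^ 2) ^ (s / 2) := by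
          gcongr
          · exact (half_pos hs.1).le
          · simp
  calc ‖squareKernel s 1 y‖
      = ‖y‖ ^ s * poissonWeight (Module.finrank ℝ E + 1) 1 y := by
        rw [Real.norm_of_nonneg (squareKernel_nonneg zero_le_one y), squareKernel,
          Real.one_rpow, one_mul]
    _ ≤ (‖y‖ ^ 2 + 1 ^ 2) ^ (s / 2) * poissonWeight (Module.finrank ℝ E + 1) 1 y := by
        gcongr
        exact poissonWeight_nonneg _ 1 y
    _ = poissonWeight (Module.finrank ℝ E + 1 - s) 1 y := by
        rw [poissonWeight, poissonWeight, ← Real.rpow_add (by positivity)]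
        congr 1
        ring

lemma lintegral_squareKernel (hs : s ∈ Ioo (0 : ℝ) 1) (ht : 0 < t) :
    ∫⁻ y : E, ENNReal.ofReal (squareKernel s t y) ∂μ =
      ENNReal.ofReal (∫ y : E, squareKernel s 1 y ∂μ) := by
  have hscaled : Integrable (fun y : E => squareKernel s t (t • y)) μ := by
    simp only [squareKernel_smul s ht]
    exact (integrable_squareKernel_one hs).const_mul _
  have hintegral := Measure.integral_comp_smul μ (squareKernel s t : E → ℝ) t
  simp only [squareKernel_smul s ht, integral_const_mul, smul_eq_mul] at hintegral
  rw [abs_of_pos (by positivity)] at hintegral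
  rw [mul_left_cancel₀ (by positivity) hintegral, ofReal_integral_eq_lintegral_ofReal
    ((integrable_comp_smul_iff μ _ ht.ne').1 hscaled)
    (Eventually.of_forall (squareKernel_nonneg ht.le))]

end Integral

lemma integrableOn_rpow_neg_mul_poissonWeight (d : ℕ) {s : ℝ} (hs : s ∈ Ioo (0 : ℝ) 1) :
    IntegrableOn (fun t : ℝ => t ^ (-s) * poissonWeight (d + 1) 1 t) (Ioi 0) := by
  have hcont : Continuous fun t : ℝ => poissonWeight ((d : ℝ) + 1) 1 t := by
    unfold poissonWeight
    exact (by fun_prop : Continuous fun t : ℝ => ‖t‖ ^ 2 + 1 ^ 2).rpow_const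
      fun t => Or.inl (by positivity)
  have htop : (fun t : ℝ => poissonWeight ((d : ℝ) + 1) 1 t) =O[atTop] (· ^ (-((d : ℝ) + 1))) := by
    refine Asymptotics.IsBigO.of_bound' ?_
    filter_upwards [eventually_gt_atTop 0] with t ht
    rw [Real.norm_of_nonneg (poissonWeight_nonneg _ 1 t), Real.norm_of_nonneg (by positivity)]
    calc poissonWeight ((d : ℝ) + 1) 1 t ≤ (t ^ 2) ^ (-((d : ℝ) + 1) / 2) :=
          Real.rpow_le_rpow_of_nonpos (by positivity) (by simp)
            (by linarith [d.cast_nonneg (α := ℝ)])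
      _ = t ^ (-((d : ℝ) + 1)) := by
          rw [← Real.rpow_natCast, ← Real.rpow_mul ht.le]
          congr 1
          push_cast
          ring
  have hbot : (fun t : ℝ => poissonWeight ((d : ℝ) + 1) 1 t) =O[𝓝[>] 0] (· ^ (-(0 : ℝ))) := by
    refine (hcont.tendsto 0).mono_left nhdsWithin_le_nhds |>.isBigO_one ℝ |>.trans_eventuallyEq ?_
    simp
  have h := mellin_convergent_of_isBigO_scalar (hcont.locallyIntegrable.locallyIntegrableOn _) htop
    (s := 1 - s) (by linarith [hs.1, d.cast_nonneg (α := ℝ)]) hbot (by linarith [hs.2])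
  simpa using h

lemma inv_mul_squareKernel_norm_mul (s : ℝ) {τ : ℝ} (hτ : 0 < τ) {y : E} (hy : y ≠ 0) :
    (‖y‖ * τ)⁻¹ * squareKernel s (‖y‖ * τ) y = (‖y‖ ^ (Module.finrank ℝ E + 1))⁻¹ *
      (τ ^ (-s) * poissonWeight (Module.finrank ℝ E + 1) 1 τ) := by
  have hr : 0 < ‖y‖ := norm_pos_iff.2 hy
  have hweight : poissonWeight (Module.finrank ℝ E + 1) (‖y‖ * τ) y =
      (‖y‖ ^ (Module.finrank ℝ E + 1))⁻¹ * poissonWeight (Module.finrank ℝ E + 1) 1 τ := by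
    have h := poissonWeight_smul (Module.finrank ℝ E + 1) hr τ (‖y‖⁻¹ • y)
    rw [smul_inv_smul₀ hr.ne', Real.rpow_neg hr.le, ← Nat.cast_add_one, Real.rpow_natCast,
      Nat.cast_add_one] at h
    rw [h, poissonWeight, poissonWeight, norm_smul, norm_inv, norm_norm, inv_mul_cancel₀ hr.ne',
      Real.norm_of_nonneg hτ.le, add_comm (1 ^ 2)]
  have hpow : (‖y‖ * τ)⁻¹ * ((‖y‖ * τ) ^ (1 - s) * ‖y‖ ^ s) = τ ^ (-s) := by
    rw [Real.mul_rpow hr.le hτ.le, Real.rpow_sub hr, Real.rpow_sub hτ, Real.rpow_neg hτ.le,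
      Real.rpow_one, Real.rpow_one]
    field_simp
  rw [squareKernel, hweight, ← mul_assoc, hpow]
  ring

lemma lintegral_inv_mul_squareKernel_le {s : ℝ} (hs : s ∈ Ioo (0 : ℝ) 1) (y : E) :
    ∫⁻ t in Ioi (0 : ℝ), ENNReal.ofReal t⁻¹ * ENNReal.ofReal (squareKernel s t y) ≤
      ENNReal.ofReal (squareKernelConst (Module.finrank ℝ E) s) *
        ENNReal.ofReal (‖y‖ ^ Module.finrank ℝ E)⁻¹ := by
  rcases eq_or_ne y 0 with rfl | hy
  · simp [squareKernel, Real.zero_rpow hs.1.ne']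
  have hr : 0 < ‖y‖ := norm_pos_iff.2 hy
  have hrescale := fun (τ : ℝ) (hτ : τ ∈ Ioi 0) => inv_mul_squareKernel_norm_mul s hτ hy
  have hint : IntegrableOn (fun t => t⁻¹ * squareKernel s t y) (Ioi 0) := by
    rw [← mul_zero ‖y‖, ← integrableOn_Ioi_comp_mul_left_iff _ _ hr]
    exact IntegrableOn.congr_fun ((integrableOn_rpow_neg_mul_poissonWeight _ hs).const_mul _)
      (fun τ hτ => (hrescale τ hτ).symm) measurableSet_Ioi
  have hnonneg : ∀ᵐ t ∂volume.restrict (Ioi 0), 0 ≤ t⁻¹ * squareKernel s t y :=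
    ae_restrict_of_forall_mem measurableSet_Ioi fun t ht =>
      mul_nonneg (inv_nonneg.2 (le_of_lt ht)) (squareKernel_nonneg (le_of_lt ht) y)
  have hintegral := integral_comp_mul_left_Ioi (fun t => t⁻¹ * squareKernel s t y) 0 hr
  rw [setIntegral_congr_fun measurableSet_Ioi hrescale, integral_const_mul, mul_zero, pow_succ,
    mul_inv_rev, mul_assoc, smul_eq_mul] at hintegral
  have hvalue : ∫ t in Ioi (0 : ℝ), t⁻¹ * squareKernel s t y =
      (‖y‖ ^ Module.finrank ℝ E)⁻¹ * squareKernelConst (Module.finrank ℝ E) s :=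
    (mul_left_cancel₀ (inv_ne_zero hr.ne') hintegral).symm
  refine le_of_eq ?_
  calc ∫⁻ t in Ioi (0 : ℝ), ENNReal.ofReal t⁻¹ * ENNReal.ofReal (squareKernel s t y)
      = ∫⁻ t in Ioi (0 : ℝ), ENNReal.ofReal (t⁻¹ * squareKernel s t y) :=
        setLIntegral_congr_fun measurableSet_Ioi fun t ht =>
          (ENNReal.ofReal_mul (inv_nonneg.2 (le_of_lt ht))).symm
    _ = ENNReal.ofReal ((‖y‖ ^ Module.finrank ℝ E)⁻¹ *
          squareKernelConst (Module.finrank ℝ E) s) := by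
        rw [← ofReal_integral_eq_lintegral_ofReal hint hnonneg, hvalue]
    _ = _ := by
        rw [ENNReal.ofReal_mul (by positivity), mul_comm]

end SquareKernel

section PoissonTypeKernel

variable {d : ℕ}

/-- The point `(y, t)` of `ℝ^{d+1}`, carrying the Euclidean norm. -/
def halfSpacePoint (y : Ed d) (t : ℝ) : Ed (d + 1) :=
  (EuclideanSpace.equiv (Fin (d + 1)) ℝ).symm (snocVec d y t)

lemma halfSpacePoint_castSucc (y : Ed d) (t : ℝ) (i : Fin d) :
    halfSpacePoint y t i.castSucc = y i := by
  simp [halfSpacePoint, snocVec]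

lemma halfSpacePoint_last (y : Ed d) (t : ℝ) : halfSpacePoint y t (Fin.last d) = t := by
  simp [halfSpacePoint, snocVec]

lemma halfSpacePoint_eq_add_smul (y : Ed d) (t : ℝ) :
    halfSpacePoint y t = halfSpacePoint y 0 + t • halfSpacePoint 0 1 := by
  ext i
  refine Fin.lastCases ?_ (fun j => ?_) i <;>
    simp [halfSpacePoint_castSucc, halfSpacePoint_last]

lemma halfSpacePoint_smul (t : ℝ) (y : Ed d) :
    halfSpacePoint (t • y) t = t • halfSpacePoint y 1 := by
  ext i
  refine Fin.lastCases ?_ (fun j => ?_) i <;>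
    simp [halfSpacePoint_castSucc, halfSpacePoint_last]

lemma norm_halfSpacePoint_sq (y : Ed d) (t : ℝ) : ‖halfSpacePoint y t‖ ^ 2 = ‖y‖ ^ 2 + t ^ 2 := by
  simp [EuclideanSpace.norm_sq_eq, Fin.sum_univ_castSucc, halfSpacePoint_castSucc,
    halfSpacePoint_last]

lemma norm_le_norm_halfSpacePoint (y : Ed d) (t : ℝ) : ‖y‖ ≤ ‖halfSpacePoint y t‖ :=
  le_of_sq_le_sq (by rw [norm_halfSpacePoint_sq]; exact le_add_of_nonneg_right (sq_nonneg t))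
    (norm_nonneg _)

lemma abs_le_norm_halfSpacePoint (y : Ed d) (t : ℝ) : |t| ≤ ‖halfSpacePoint y t‖ :=
  abs_le_of_sq_le_sq (by rw [norm_halfSpacePoint_sq]; exact le_add_of_nonneg_left (sq_nonneg _))
    (norm_nonneg _)

@[fun_prop]
lemma measurable_halfSpacePoint (t : ℝ) : Measurable fun y : Ed d => halfSpacePoint y t := by
  refine (EuclideanSpace.equiv (Fin (d + 1)) ℝ).symm.continuous.measurable.comp
    (measurable_pi_lambda _ fun i => ?_)
  refine Fin.lastCases ?_ (fun j => ?_) i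
  · simp [snocVec]
  · simp only [snocVec, Fin.snoc_castSucc]
    fun_prop

lemma hasDerivAt_halfSpacePoint (y : Ed d) (t : ℝ) :
    HasDerivAt (halfSpacePoint y) (halfSpacePoint 0 1) t := by
  rw [funext (halfSpacePoint_eq_add_smul y)]
  simpa using ((hasDerivAt_id t).smul_const (halfSpacePoint (0 : Ed d) 1)).const_add
    (halfSpacePoint y 0)

/-- The normalising constant `2 (d + 1) / ω_d` of the kernel `ℙ_t`. -/
def poissonTypeConst (d : ℕ) : ℝ := 2 * ((d : ℝ) + 1) / sphereVol d

lemma poissonTypeConst_nonneg (d : ℕ) : 0 ≤ poissonTypeConst d := by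
  unfold poissonTypeConst sphereVol; positivity

/-- The value `ℙ_t(y) (w, 0)` of the matrix kernel on a vector with vanishing last component. Only
the projection of `w` onto `y` enters it. -/
def poissonTypeKernel (t : ℝ) (y w : Ed d) : Ed (d + 1) :=
  (poissonTypeConst d * inner ℝ y w) •
    ((t * poissonWeight ((d : ℝ) + 3) t y) • halfSpacePoint y t)

/-- The derivative `∂_t ℙ_t(y) (w, 0)`. -/
def poissonTypeKernelDeriv (t : ℝ) (y w : Ed d) : Ed (d + 1) :=
  (poissonTypeConst d * inner ℝ y w) •
    ((poissonWeight ((d : ℝ) + 3) t y - (d + 3) * (t ^ 2 * poissonWeight ((d : ℝ) + 5) t y)) •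
      halfSpacePoint y t + (t * poissonWeight ((d : ℝ) + 3) t y) • halfSpacePoint 0 1)

lemma sum_pEntry_mul_appendZero (t : ℝ) (y : Ed d) (f : Ed d → Ed d) (z : Ed d)
    (i : Fin (d + 1)) :
    ∑ j, pEntry d t i j y * appendZero d f z j = poissonTypeKernel t y (f z) i := by
  have hQ : 0 ≤ ‖y‖ ^ 2 + t ^ 2 := by positivity
  simp only [pEntry, appendZero, poissonTypeKernel, poissonTypeConst, poissonWeight,
    halfSpacePoint, Fin.sum_univ_castSucc, PiLp.inner_apply, neg_div, Real.rpow_neg hQ]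
  simp only [snocVec, PiLp.continuousLinearEquiv_symm_apply, Fin.snoc_castSucc, Fin.snoc_last,
    mul_zero, add_zero, RCLike.inner_apply, Real.ringHom_apply, PiLp.smul_apply, smul_eq_mul,
    Finset.mul_sum, Finset.sum_mul]
  refine Finset.sum_congr rfl fun j _ => ?_
  ring

lemma poissonTypeKernel_add (t : ℝ) (y v w : Ed d) :
    poissonTypeKernel t y (v + w) = poissonTypeKernel t y v + poissonTypeKernel t y w := by
  simp only [poissonTypeKernel, inner_add_right, mul_add, add_smul]

lemma poissonTypeKernel_smul {t : ℝ} (ht : 0 < t) (y w : Ed d) :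
    poissonTypeKernel t (t • y) w = (t ^ d)⁻¹ • poissonTypeKernel 1 y w := by
  have hweight := poissonWeight_smul ((d : ℝ) + 3) ht 1 y
  have hpow : t ^ (-((d : ℝ) + 3)) = (t ^ d)⁻¹ * (t ^ 3)⁻¹ := by
    rw [Real.rpow_neg ht.le, Real.rpow_add ht, Real.rpow_natCast, mul_inv]
    norm_cast
  rw [mul_one, hpow] at hweight
  rw [poissonTypeKernel, poissonTypeKernel, halfSpacePoint_smul, hweight, inner_smul_left]
  simp only [smul_smul, conj_trivial]
  congr 1
  field_simp

lemma hasDerivAt_poissonTypeKernel {t : ℝ} (ht : t ≠ 0) (y w : Ed d) :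
    HasDerivAt (fun u => poissonTypeKernel u y w) (poissonTypeKernelDeriv t y w) t := by
  have hradial := (hasDerivAt_id t).mul (hasDerivAt_poissonWeight ((d : ℝ) + 3) ht y)
  refine ((hradial.smul (hasDerivAt_halfSpacePoint y t)).const_smul
    (poissonTypeConst d * inner ℝ y w)).congr_deriv ?_
  rw [poissonTypeKernelDeriv, add_comm (_ • halfSpacePoint y t)]
  simp only [id, Pi.mul_apply]
  congr 3
  ring_nf

lemma poissonWeight_mul_norm_halfSpacePoint_sq {t : ℝ} (ht : t ≠ 0) (y : Ed d) :
    poissonWeight ((d : ℝ) + 3) t y * ‖halfSpacePoint y t‖ ^ 2 =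
      poissonWeight ((d : ℝ) + 1) t y := by
  rw [norm_halfSpacePoint_sq, ← poissonWeight_add_two_mul ((d : ℝ) + 1) ht,
    show (d : ℝ) + 1 + 2 = d + 3 by ring]

lemma norm_poissonTypeKernel_le {t : ℝ} (ht : 0 < t) (y w : Ed d) :
    ‖poissonTypeKernel t y w‖ ≤
      poissonTypeConst d * t * (poissonWeight ((d : ℝ) + 1) t y * ‖w‖) := by
  have hc := poissonTypeConst_nonneg d
  have hW := poissonWeight_nonneg ((d : ℝ) + 3) t y
  have hinner : |inner ℝ y w| ≤ ‖halfSpacePoint y t‖ * ‖w‖ :=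
    (abs_real_inner_le_norm y w).trans
      (mul_le_mul_of_nonneg_right (norm_le_norm_halfSpacePoint y t) (norm_nonneg w))
  calc ‖poissonTypeKernel t y w‖
      = poissonTypeConst d * |inner ℝ y w| *
          (t * poissonWeight ((d : ℝ) + 3) t y * ‖halfSpacePoint y t‖) := by
        rw [poissonTypeKernel, norm_smul, norm_smul, Real.norm_eq_abs, Real.norm_eq_abs, abs_mul,
          abs_mul, abs_of_nonneg hc, abs_of_nonneg ht.le, abs_of_nonneg hW]
    _ ≤ poissonTypeConst d * (‖halfSpacePoint y t‖ * ‖w‖) *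
          (t * poissonWeight ((d : ℝ) + 3) t y * ‖halfSpacePoint y t‖) := by
        gcongr
    _ = poissonTypeConst d * t * (poissonWeight ((d : ℝ) + 1) t y * ‖w‖) := by
        rw [← poissonWeight_mul_norm_halfSpacePoint_sq ht.ne']
        ring

lemma abs_inner_mul_poissonWeight_mul_norm_le {t : ℝ} (ht : t ≠ 0) (y w : Ed d) :
    |inner ℝ y w| * (poissonWeight ((d : ℝ) + 3) t y * ‖halfSpacePoint y t‖) ≤
      poissonWeight ((d : ℝ) + 1) t y * (|inner ℝ w y| / ‖y‖) := by
  rcases eq_or_ne y 0 with rfl | hy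
  · simp
  have hy0 : 0 < ‖y‖ := norm_pos_iff.2 hy
  have hW := poissonWeight_nonneg ((d : ℝ) + 3) t y
  rw [real_inner_comm, mul_div_assoc', le_div_iff₀ hy0,
    ← poissonWeight_mul_norm_halfSpacePoint_sq ht]
  calc |inner ℝ w y| * (poissonWeight ((d : ℝ) + 3) t y * ‖halfSpacePoint y t‖) * ‖y‖
      ≤ |inner ℝ w y| * (poissonWeight ((d : ℝ) + 3) t y * ‖halfSpacePoint y t‖) *
          ‖halfSpacePoint y t‖ := by
        gcongr
        exact norm_le_norm_halfSpacePoint y t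
    _ = _ := by ring

lemma norm_poissonTypeKernelDeriv_le {t : ℝ} (ht : 0 < t) (y w : Ed d) :
    ‖poissonTypeKernelDeriv t y w‖ ≤ poissonTypeConst d * (d + 4) *
      (poissonWeight ((d : ℝ) + 1) t y * (|inner ℝ w y| / ‖y‖)) := by
  have hc := poissonTypeConst_nonneg d
  set W := poissonWeight ((d : ℝ) + 3) t y
  have hW : 0 ≤ W := poissonWeight_nonneg _ t y
  have hsq_nonneg : 0 ≤ t ^ 2 * poissonWeight ((d : ℝ) + 5) t y :=
    mul_nonneg (sq_nonneg t) (poissonWeight_nonneg _ t y)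
  have hsq_le : t ^ 2 * poissonWeight ((d : ℝ) + 5) t y ≤ W := by
    have h := poissonWeight_add_two_mul ((d : ℝ) + 3) ht.ne' y
    rw [add_assoc, show (3 : ℝ) + 2 = 5 by norm_num] at h
    nlinarith [mul_nonneg (poissonWeight_nonneg ((d : ℝ) + 5) t y) (sq_nonneg ‖y‖)]
  have hradial : |W - (d + 3) * (t ^ 2 * poissonWeight ((d : ℝ) + 5) t y)| ≤ (d + 3) * W := by
    rw [abs_le]
    constructor <;> nlinarith
  have hunit : ‖halfSpacePoint (0 : Ed d) 1‖ = 1 := by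
    rw [← sq_eq_sq₀ (norm_nonneg _) zero_le_one, norm_halfSpacePoint_sq]
    simp
  have htY : t ≤ ‖halfSpacePoint y t‖ := (le_abs_self t).trans (abs_le_norm_halfSpacePoint y t)
  have hvector : ‖(W - (d + 3) * (t ^ 2 * poissonWeight ((d : ℝ) + 5) t y)) • halfSpacePoint y t +
      (t * W) • halfSpacePoint (0 : Ed d) 1‖ ≤ (d + 4) * (W * ‖halfSpacePoint y t‖) := by
    refine (norm_add_le _ _).trans ?_
    rw [norm_smul, norm_smul, hunit, mul_one, Real.norm_eq_abs, Real.norm_of_nonneg (by positivity)]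
    nlinarith [mul_le_mul_of_nonneg_right hradial (norm_nonneg (halfSpacePoint y t)),
      mul_le_mul_of_nonneg_right htY hW]
  calc ‖poissonTypeKernelDeriv t y w‖
      ≤ poissonTypeConst d * |inner ℝ y w| * ((d + 4) * (W * ‖halfSpacePoint y t‖)) := by
        rw [poissonTypeKernelDeriv, norm_smul, Real.norm_eq_abs, abs_mul, abs_of_nonneg hc]
        gcongr
    _ = poissonTypeConst d * (d + 4) * (|inner ℝ y w| * (W * ‖halfSpacePoint y t‖)) := by ring
    _ ≤ _ := mul_le_mul_of_nonneg_left (abs_inner_mul_poissonWeight_mul_norm_le ht.ne' y w)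
        (by positivity)

end PoissonTypeKernel

section Convolution

variable {d : ℕ} {t : ℝ} {f g : Ed d → Ed d}

lemma integrable_poissonWeight_smul_const (ht : 0 < t) (v : Ed d) :
    Integrable fun y : Ed d => poissonWeight ((d : ℝ) + 1) t y • v :=
  (integrable_poissonWeight (by simp) ht).smul_const v

lemma aestronglyMeasurable_inner_smul (c : ℝ) (hg : AEStronglyMeasurable g)
    {Y : Ed d → Ed (d + 1)} (hY : Measurable Y) :
    AEStronglyMeasurable fun y => (c * inner ℝ y (g y)) • Y y :=
  ((aestronglyMeasurable_id.inner (𝕜 := ℝ) hg).const_mul c).smul hY.aestronglyMeasurable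

lemma integrable_poissonTypeKernel (ht : 0 < t)
    (hg : Integrable fun y => poissonWeight ((d : ℝ) + 1) t y • g y) :
    Integrable fun y => poissonTypeKernel t y (g y) := by
  have hgm := aestronglyMeasurable_of_integrable_poissonWeight_smul ht.ne' hg
  refine (hg.norm.const_mul (poissonTypeConst d * t)).mono'
    (aestronglyMeasurable_inner_smul _ hgm (by fun_prop)) ?_
  filter_upwards with y
  rw [norm_smul, Real.norm_of_nonneg (poissonWeight_nonneg _ t y)]
  exact norm_poissonTypeKernel_le ht y (g y)

lemma integral_poissonTypeKernel_const (ht : 0 < t) (v : Ed d) :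
    ∫ y, poissonTypeKernel t y v = ∫ y, poissonTypeKernel 1 y v := by
  have h := Measure.integral_comp_smul volume (fun y => poissonTypeKernel t y v) t
  simp only [poissonTypeKernel_smul ht, integral_smul, finrank_euclideanSpace,
    Fintype.card_fin] at h
  rw [abs_of_pos (by positivity)] at h
  exact (smul_right_injective _ (by positivity) h).symm

lemma hasDerivAt_integral_poissonTypeKernel (ht : 0 < t)
    (hg : ∀ u, 0 < u → Integrable fun y => poissonWeight ((d : ℝ) + 1) u y • g y) :
    HasDerivAt (fun u => ∫ y, poissonTypeKernel u y (g y))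
      (∫ y, poissonTypeKernelDeriv t y (g y)) t := by
  have ht2 : 0 < t / 2 := half_pos ht
  have hgm := aestronglyMeasurable_of_integrable_poissonWeight_smul ht.ne' (hg t ht)
  have hbound (y : Ed d) (u : ℝ) (hu : u ∈ Ioi (t / 2)) : ‖poissonTypeKernelDeriv u y (g y)‖ ≤
      poissonTypeConst d * (d + 4) * ‖poissonWeight ((d : ℝ) + 1) (t / 2) y • g y‖ := by
    have hc := poissonTypeConst_nonneg d
    have hw := poissonWeight_nonneg ((d : ℝ) + 1) (t / 2) y
    rw [norm_smul, Real.norm_of_nonneg hw]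
    refine (norm_poissonTypeKernelDeriv_le (ht2.trans hu) y (g y)).trans ?_
    gcongr
    · exact poissonWeight_anti (by positivity) ht2 (le_of_lt hu) y
    · exact div_le_of_le_mul₀ (norm_nonneg y) (norm_nonneg _) (abs_real_inner_le_norm _ _)
  refine (hasDerivAt_integral_of_dominated_loc_of_deriv_le
    (F := fun u y => poissonTypeKernel u y (g y))
    (F' := fun u y => poissonTypeKernelDeriv u y (g y))
    (Ioi_mem_nhds (half_lt_self ht)) ?_ (integrable_poissonTypeKernel ht (hg t ht))
    (aestronglyMeasurable_inner_smul _ hgm (by fun_prop))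
    (Eventually.of_forall hbound) ((hg _ ht2).norm.const_mul _) ?_).2
  · filter_upwards [Ioi_mem_nhds ht] with u hu
    exact (integrable_poissonTypeKernel hu (hg u hu)).1
  · exact Eventually.of_forall fun y u hu =>
      hasDerivAt_poissonTypeKernel (ht2.trans hu).ne' y (g y)

lemma pConv_appendZero (hf : Integrable fun y => poissonWeight ((d : ℝ) + 1) 1 y • f y)
    (ht : 0 < t) (x : Ed d) :
    pConv d t (appendZero d f) x = ∫ y, poissonTypeKernel t y (f (x - y)) := by
  have hint := integrable_poissonTypeKernel ht
    (integrable_poissonWeight_smul_comp_sub (by positivity) hf ht x)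
  ext i
  rw [eval_integral_piLp fun j => hint.eval_piLp j]
  simp [pConv, sum_pEntry_mul_appendZero]

lemma hasDerivAt_pConv_appendZero
    (hf : Integrable fun y => poissonWeight ((d : ℝ) + 1) 1 y • f y) (ht : 0 < t) (x : Ed d) :
    HasDerivAt (fun u => pConv d u (appendZero d f) x)
      (∫ y, poissonTypeKernelDeriv t y (f (x - y) - f x)) t := by
  have hincr (u : ℝ) (hu : 0 < u) :
      Integrable fun y => poissonWeight ((d : ℝ) + 1) u y • (f (x - y) - f x) := by
    simp only [smul_sub]
    exact (integrable_poissonWeight_smul_comp_sub (by positivity) hf hu x).sub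
      (integrable_poissonWeight_smul_const hu (f x))
  refine ((hasDerivAt_integral_poissonTypeKernel ht hincr).add_const
    (∫ y, poissonTypeKernel 1 y (f x))).congr_of_eventuallyEq ?_
  filter_upwards [Ioi_mem_nhds ht] with u hu
  rw [pConv_appendZero hf hu, ← integral_poissonTypeKernel_const hu,
    ← integral_add (integrable_poissonTypeKernel hu (hincr u hu))
      (integrable_poissonTypeKernel hu (integrable_poissonWeight_smul_const hu (f x)))]
  simp only [← poissonTypeKernel_add, sub_add_cancel]

end Convolution

section ProjDiffQuotient

variable {d : ℕ} {t : ℝ} {f : Ed d → Ed d}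

/-- The projected difference quotient `|(f (x - y) - f x) · y| / |y|^{1+s}` of order `s`. -/
def projDiffQuotient (s : ℝ) (f : Ed d → Ed d) (x y : Ed d) : ℝ≥0∞ :=
  ENNReal.ofReal (|inner ℝ (f (x - y) - f x) y| / ‖y‖ ^ (1 + s))

lemma aemeasurable_uncurry_projDiffQuotient (s : ℝ) (hf : AEStronglyMeasurable f) :
    AEMeasurable (Function.uncurry (projDiffQuotient s f)) (volume.prod volume) := by
  have hincr : AEMeasurable (fun z : Ed d × Ed d => f (z.1 - z.2) - f z.1)
      (volume.prod volume) :=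
    (hf.aemeasurable.comp_quasiMeasurePreserving
      (quasiMeasurePreserving_sub_of_right_invariant volume volume)).sub hf.aemeasurable.comp_fst
  have hnorm : Measurable fun z : Ed d × Ed d => ‖z.2‖ ^ (1 + s) := by fun_prop
  have hinner := hincr.inner (𝕜 := ℝ) measurable_snd.aemeasurable
  exact (hinner.norm.div hnorm.aemeasurable).ennreal_ofReal

lemma projGagP_univ_eq {p : ℝ} (hp : 0 < p) (s : ℝ) (f : Ed d → Ed d) :
    projGagP d s p univ f =
      ∫⁻ x, ∫⁻ y, ENNReal.ofReal (‖y‖ ^ d)⁻¹ * projDiffQuotient s f x y ^ p := by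
  simp only [projGagP, Measure.restrict_univ]
  refine lintegral_congr fun x => ?_
  rw [← lintegral_sub_left_eq_self _ x]
  refine lintegral_congr fun y => ?_
  rcases eq_or_ne y 0 with rfl | hy
  · simp [projDiffQuotient, hp, hp.ne']
  rw [projDiffQuotient, ENNReal.ofReal_rpow_of_nonneg (by positivity) hp.le,
    ← ENNReal.ofReal_mul (by positivity), show x - y - x = -y by abel, inner_neg_right, abs_neg,
    norm_neg]
  congr 1
  have hy0 : 0 < ‖y‖ := norm_pos_iff.2 hy
  rw [Real.div_rpow (by positivity) (by positivity), Real.div_rpow (by positivity) (by positivity),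
    ← Real.rpow_mul hy0.le, add_mul, one_mul, Real.rpow_add hy0, Real.rpow_add hy0,
    Real.rpow_natCast]
  field_simp

lemma ofReal_mul_poissonWeight_mul_eq_squareKernel_mul (s : ℝ) (ht : 0 < t) (x y : Ed d) :
    ENNReal.ofReal (t ^ (1 - s)) * ENNReal.ofReal (poissonWeight ((d : ℝ) + 1) t y *
      (|inner ℝ (f (x - y) - f x) y| / ‖y‖)) =
      ENNReal.ofReal (squareKernel s t y) * projDiffQuotient s f x y := by
  rcases eq_or_ne y 0 with rfl | hy
  · simp [projDiffQuotient]
  have hy0 : 0 < ‖y‖ := norm_pos_iff.2 hy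
  rw [projDiffQuotient, ← ENNReal.ofReal_mul (by positivity),
    ← ENNReal.ofReal_mul (squareKernel_nonneg ht.le y), squareKernel, finrank_euclideanSpace,
    Fintype.card_fin, Real.rpow_add hy0, Real.rpow_one]
  congr 1
  field_simp

lemma ofReal_mul_enorm_deriv_pConv_le (s : ℝ) (ht : 0 < t)
    (hf : Integrable fun y => poissonWeight ((d : ℝ) + 1) 1 y • f y) (x : Ed d) :
    ENNReal.ofReal (t ^ (1 - s)) * ‖deriv (fun u => pConv d u (appendZero d f) x) t‖ₑ ≤
      ENNReal.ofReal (poissonTypeConst d * (d + 4)) *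
        ∫⁻ y, ENNReal.ofReal (squareKernel s t y) * projDiffQuotient s f x y := by
  have hc := poissonTypeConst_nonneg d
  rw [(hasDerivAt_pConv_appendZero hf ht x).deriv,
    ← lintegral_const_mul' _ _ ENNReal.ofReal_ne_top]
  calc ENNReal.ofReal (t ^ (1 - s)) * ‖∫ y, poissonTypeKernelDeriv t y (f (x - y) - f x)‖ₑ
      ≤ ENNReal.ofReal (t ^ (1 - s)) * ∫⁻ y, ‖poissonTypeKernelDeriv t y (f (x - y) - f x)‖ₑ := by
        gcongr
        exact enorm_integral_le_lintegral_enorm _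
    _ = ∫⁻ y, ENNReal.ofReal (t ^ (1 - s)) * ‖poissonTypeKernelDeriv t y (f (x - y) - f x)‖ₑ :=
        (lintegral_const_mul' _ _ ENNReal.ofReal_ne_top).symm
    _ ≤ _ := by
        refine lintegral_mono fun y => ?_
        rw [← ofReal_mul_poissonWeight_mul_eq_squareKernel_mul s ht, mul_left_comm,
          ← ENNReal.ofReal_mul (by positivity), ← ofReal_norm]
        gcongr
        exact norm_poissonTypeKernelDeriv_le ht y _

end ProjDiffQuotient

section SquareFunction

variable {d : ℕ} {s p : ℝ} {f : Ed d → Ed d}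

/-- The constant in the `p`-th power of the square-function bound. -/
def squareFunctionConst (d : ℕ) (s p : ℝ) : ℝ≥0∞ :=
  ENNReal.ofReal (poissonTypeConst d * (d + 4)) ^ p *
    (ENNReal.ofReal (∫ y : Ed d, squareKernel s 1 y) ^ (p - 1) *
      ENNReal.ofReal (squareKernelConst d s))

lemma squareFunctionConst_ne_top (hp : 1 ≤ p) : squareFunctionConst d s p ≠ ∞ :=
  ENNReal.mul_ne_top (ENNReal.rpow_ne_top_of_nonneg (by linarith) ENNReal.ofReal_ne_top)
    (ENNReal.mul_ne_top (ENNReal.rpow_ne_top_of_nonneg (by linarith) ENNReal.ofReal_ne_top)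
      ENNReal.ofReal_ne_top)

lemma rpow_mul_eLpNorm_deriv_pConv_le (hp : 1 ≤ p) {t : ℝ} (ht : 0 < t)
    (hf : Integrable fun y => poissonWeight ((d : ℝ) + 1) 1 y • f y) :
    (ENNReal.ofReal (t ^ (1 - s)) *
        eLpNorm (fun x => deriv (fun u => pConv d u (appendZero d f) x) t)
          (ENNReal.ofReal p) volume) ^ p ≤
      ENNReal.ofReal (poissonTypeConst d * (d + 4)) ^ p *
        ∫⁻ x, (∫⁻ y, ENNReal.ofReal (squareKernel s t y) * projDiffQuotient s f x y) ^ p := by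
  have hp0 : 0 < p := by linarith
  rw [eLpNorm_eq_lintegral_rpow_enorm_toReal (by simpa using hp0) ENNReal.ofReal_ne_top,
    ENNReal.toReal_ofReal hp0.le, ENNReal.mul_rpow_of_nonneg _ _ hp0.le, ← ENNReal.rpow_mul,
    one_div_mul_cancel hp0.ne', ENNReal.rpow_one,
    ← lintegral_const_mul' _ _ (ENNReal.rpow_ne_top_of_nonneg hp0.le ENNReal.ofReal_ne_top),
    ← lintegral_const_mul' _ _ (ENNReal.rpow_ne_top_of_nonneg hp0.le ENNReal.ofReal_ne_top)]
  simp only [← ENNReal.mul_rpow_of_nonneg _ _ hp0.le]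
  exact lintegral_mono fun x =>
    ENNReal.rpow_le_rpow (ofReal_mul_enorm_deriv_pConv_le s ht hf x) hp0.le

lemma lintegral_squareKernel_rpow_le (hs : s ∈ Ioo (0 : ℝ) 1) (hp : 1 ≤ p)
    (hf : AEStronglyMeasurable f) :
    ∫⁻ t in Ioi (0 : ℝ), ENNReal.ofReal t⁻¹ *
        ∫⁻ x, (∫⁻ y, ENNReal.ofReal (squareKernel s t y) * projDiffQuotient s f x y) ^ p ≤
      ENNReal.ofReal (∫ y : Ed d, squareKernel s 1 y) ^ (p - 1) *
        ENNReal.ofReal (squareKernelConst d s) * projGagP d s p univ f := by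
  have hmeas : Measurable (Function.uncurry fun (t : ℝ) (y : Ed d) =>
      ENNReal.ofReal (squareKernel s t y)) := by
    unfold Function.uncurry
    fun_prop
  have hmass : ∀ᵐ t ∂volume.restrict (Ioi (0 : ℝ)),
      ∫⁻ y : Ed d, ENNReal.ofReal (squareKernel s t y) ≤
        ENNReal.ofReal (∫ y : Ed d, squareKernel s 1 y) :=
    ae_restrict_of_forall_mem measurableSet_Ioi fun t ht => (lintegral_squareKernel hs ht).le
  have hweight (y : Ed d) :
      ∫⁻ t in Ioi (0 : ℝ), ENNReal.ofReal t⁻¹ * ENNReal.ofReal (squareKernel s t y) ≤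
        ENNReal.ofReal (squareKernelConst d s) * ENNReal.ofReal (‖y‖ ^ d)⁻¹ := by
    simpa only [finrank_euclideanSpace, Fintype.card_fin] using
      lintegral_inv_mul_squareKernel_le hs y
  refine (lintegral_lintegral_rpow_lintegral_mul_le hp ENNReal.ofReal_ne_top (by fun_prop) hmeas
    (aemeasurable_uncurry_projDiffQuotient s hf) hmass hweight).trans_eq ?_
  simp only [projGagP_univ_eq (zero_lt_one.trans_le hp), mul_assoc,
    lintegral_const_mul' _ _ ENNReal.ofReal_ne_top]

lemma lintegral_rpow_deriv_pConv_le (hs : s ∈ Ioo (0 : ℝ) 1) (hp : 1 ≤ p)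
    (hf : Integrable fun y => poissonWeight ((d : ℝ) + 1) 1 y • f y) :
    ∫⁻ t in Ioi (0 : ℝ),
        (ENNReal.ofReal (t ^ (1 - s)) *
            eLpNorm (fun x => deriv (fun u => pConv d u (appendZero d f) x) t)
              (ENNReal.ofReal p) volume) ^ p * ENNReal.ofReal t⁻¹ ≤
      squareFunctionConst d s p * projGagP d s p univ f := by
  have hA : ENNReal.ofReal (poissonTypeConst d * (d + 4)) ^ p ≠ ∞ :=
    ENNReal.rpow_ne_top_of_nonneg (by linarith) ENNReal.ofReal_ne_top
  rw [squareFunctionConst, mul_assoc]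
  refine le_trans ?_ (mul_le_mul_right (lintegral_squareKernel_rpow_le hs hp
    (aestronglyMeasurable_of_integrable_poissonWeight_smul one_ne_zero hf)) _)
  rw [← lintegral_const_mul' _ _ hA]
  refine setLIntegral_mono' measurableSet_Ioi fun t ht => ?_
  rw [mul_left_comm, mul_comm _ (ENNReal.ofReal t⁻¹)]
  gcongr
  exact rpow_mul_eLpNorm_deriv_pConv_le hp ht hf

end SquareFunction

theorem square_function_bound_by_proj_seminorm_general (d : ℕ) (s p : ℝ)
    (hs : s ∈ Set.Ioo (0 : ℝ) 1) (hp : 1 ≤ p) :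
    ∃ C : ℝ, 0 < C ∧
      ∀ f : Ed d → Ed d, Integrable (fun y => poissonWeight ((d : ℝ) + 1) 1 y • f y) →
        (∫⁻ t in Set.Ioi (0 : ℝ),
            (ENNReal.ofReal (t ^ (1 - s)) *
                eLpNorm (fun x => deriv (fun τ => pConv d τ (appendZero d f) x) t)
                  (ENNReal.ofReal p) volume) ^ p *
              ENNReal.ofReal t⁻¹) ^ (1 / p) ≤
          ENNReal.ofReal C * projSem d s p Set.univ f := by
  have hp0 : 0 ≤ 1 / p := by positivity
  set B := squareFunctionConst d s p ^ (1 / p)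
  have hBtop : B ≠ ∞ := ENNReal.rpow_ne_top_of_nonneg hp0 (squareFunctionConst_ne_top hp)
  refine ⟨B.toReal + 1, by positivity, fun f hf => ?_⟩
  calc _ ≤ (squareFunctionConst d s p * projGagP d s p univ f) ^ (1 / p) :=
        ENNReal.rpow_le_rpow (lintegral_rpow_deriv_pConv_le hs hp hf) hp0
    _ = B * projSem d s p univ f := ENNReal.mul_rpow_of_nonneg _ _ hp0
    _ ≤ ENNReal.ofReal (B.toReal + 1) * projSem d s p univ f := by
        gcongr
        exact (ENNReal.ofReal_toReal hBtop).ge.trans (ENNReal.ofReal_le_ofReal (by simp))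

/-- **Square-function bound by the projected seminorm.** For `s ∈ (0,1)`, `1 < p < ∞` and
`f ∈ L^p(ℝ^d;ℝ^d)`, with `F = (f,0)` and `U(x,t) = (ℙ_t ∗ F)(x)`, there is
`C = C(d,p,s) > 0` such that
`(∫_0^∞ (t^{1−s} ‖∂_t U(·,t)‖_{L^p})^p dt/t)^{1/p} ≤ C [f]_{𝒳^s_p(ℝ^d)}`. -/
theorem square_function_bound_by_proj_seminorm (d : ℕ) (s p : ℝ)
    (hs : s ∈ Set.Ioo (0 : ℝ) 1) (hp : 1 < p) :
    ∃ C : ℝ, 0 < C ∧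
      ∀ f : Ed d → Ed d, MemLp f (ENNReal.ofReal p) volume →
        (∫⁻ t in Set.Ioi (0 : ℝ),
            (ENNReal.ofReal (t ^ (1 - s)) *
                eLpNorm (fun x => deriv (fun τ => pConv d τ (appendZero d f) x) t)
                  (ENNReal.ofReal p) volume) ^ p *
              ENNReal.ofReal t⁻¹) ^ (1 / p) ≤
          ENNReal.ofReal C * projSem d s p Set.univ f := by
  obtain ⟨C, hC, hbound⟩ := square_function_bound_by_proj_seminorm_general d s p hs hp.le
  exact ⟨C, hC, fun f hf => hbound f
    (integrable_poissonWeight_smul_of_memLp (by simp) hp.le hf)⟩
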